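/- Let 1 ≤ r ≤ e ≤ q be positive integers with r + e + q = n, let P_1 = (x_1,…,x_r), P_2 = (x_{r+1},…,x_{r+e}), P_3 = (x_{r+e+1},…,x_{r+e+q}) be prime ideals of S = K[x_1,…,x_n], and let I = P_1 ∩ P_2 ∩ P_3. If r ≤ ⌈e/2⌉, then sdepth_S(S/I) = r + min{ e, ⌈q/2⌉ }. -/

import Mathlib

open MvPolynomial

/-- The Stanley space `u·K[Z]` inside the polynomial ring `K[x_i : i ∈ σ]`:
the `K`-span of all monomials `x^(u+v)` with `supp v ⊆ Z`. -/
noncomputable def stanleySpace (K : Type*) [Field K] {σ : Type*} (u : σ →₀ ℕ) (Z : Set σ) :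
    Submodule K (MvPolynomial σ K) :=
  Submodule.span K
    ((fun v : σ →₀ ℕ => (monomial (u + v) (1 : K) : MvPolynomial σ K)) ''
      {v | (v.support : Set σ) ⊆ Z})

/-- `(u, Z)` (indexed by a finite type `ι`) is a Stanley decomposition of the monomial
ideal `I`: the Stanley spaces `x^(u i)·K[Z i]` are independent and their (direct) sum is `I`
as a `K`-vector space.  (Inside the polynomial ring each Stanley space is automatically a
free `K[Z]`-module.) -/
def IsStanleyDecompOfIdeal {K σ : Type*} [Field K] {ι : Type} [Fintype ι]
    (I : Ideal (MvPolynomial σ K)) (u : ι → (σ →₀ ℕ)) (Z : ι → Finset σ) : Prop :=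
  iSupIndep (fun i => stanleySpace K (u i) (Z i)) ∧
    (⨆ i, stanleySpace K (u i) (Z i)) = Submodule.restrictScalars K I

/-- The Stanley depth of a monomial ideal `I`: the largest `d` such that there is a Stanley
decomposition of `I` all of whose Stanley spaces `u_i K[Z_i]` satisfy `|Z_i| ≥ d`. -/
noncomputable def sdepthIdeal {K σ : Type*} [Field K] (I : Ideal (MvPolynomial σ K)) : ℕ :=
  sSup {d | ∃ (ι : Type) (_ : Fintype ι) (_ : Nonempty ι) (u : ι → (σ →₀ ℕ))
    (Z : ι → Finset σ), IsStanleyDecompOfIdeal I u Z ∧ ∀ i, d ≤ (Z i).card}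

/-- `(u, Z)` is a Stanley decomposition of `S/I`:  each Stanley space `x^(u i)·K[Z i]` meets
`I` trivially (equivalently, its image in `S/I` is a free `K[Z i]`-module), the images of the
Stanley spaces in `S/I` are independent, and they sum to `S/I`. -/
def IsStanleyDecompOfQuotient {K σ : Type*} [Field K] {ι : Type} [Fintype ι]
    (I : Ideal (MvPolynomial σ K)) (u : ι → (σ →₀ ℕ)) (Z : ι → Finset σ) : Prop :=
  (∀ i, Disjoint (stanleySpace K (u i) (Z i)) (Submodule.restrictScalars K I)) ∧
    iSupIndep (fun i =>
      (stanleySpace K (u i) (Z i)).map (Ideal.Quotient.mkₐ K I).toLinearMap) ∧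
    (⨆ i, (stanleySpace K (u i) (Z i)).map (Ideal.Quotient.mkₐ K I).toLinearMap) = ⊤

/-- The Stanley depth of `S/I` for a monomial ideal `I`. -/
noncomputable def sdepthQuot {K σ : Type*} [Field K] (I : Ideal (MvPolynomial σ K)) : ℕ :=
  sSup {d | ∃ (ι : Type) (_ : Fintype ι) (_ : Nonempty ι) (u : ι → (σ →₀ ℕ))
    (Z : ι → Finset σ), IsStanleyDecompOfQuotient I u Z ∧ ∀ i, d ≤ (Z i).card}

/-- A monomial ideal: an ideal generated by monomials. -/
def IsMonomialIdeal {K σ : Type*} [Field K] (I : Ideal (MvPolynomial σ K)) : Prop :=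
  ∃ A : Set (σ →₀ ℕ), I = Ideal.span ((fun a => (monomial a (1 : K) : MvPolynomial σ K)) '' A)

/-- The (exponents of the) minimal monomial generators of a monomial ideal `I`:
monomials in `I` that are not proper multiples of monomials in `I`. -/
def minimalGenerators {K σ : Type*} [Field K] (I : Ideal (MvPolynomial σ K)) :
    Set (σ →₀ ℕ) :=
  {a | (monomial a (1 : K) : MvPolynomial σ K) ∈ I ∧
    ∀ b < a, (monomial b (1 : K) : MvPolynomial σ K) ∉ I}

/-- The depth (w.r.t. the maximal graded ideal `m = (x_1,…,x_n)`) of a module `M` over the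
polynomial ring: the maximal length of a regular sequence on `M` consisting of elements
of `m`. -/
noncomputable def mdepth (K σ : Type*) [Field K] (M : Type*) [AddCommGroup M]
    [Module (MvPolynomial σ K) M] : ℕ :=
  sSup {k | ∃ rs : List (MvPolynomial σ K), rs.length = k ∧
    (∀ r ∈ rs, r ∈ Ideal.span (Set.range (X : σ → MvPolynomial σ K))) ∧
    RingTheory.Sequence.IsRegular M rs}

/-- The height of a prime ideal: the height of the corresponding point
of the prime spectrum, i.e. the supremum of lengths of chains of primes below it. -/
noncomputable def primeHt {R : Type*} [CommRing R] (P : Ideal R) (hP : P.IsPrime) : ℕ∞ :=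
  Order.height (⟨P, hP⟩ : PrimeSpectrum R)

/-!
The monomials outside a monomial ideal `I` form a basis of `S/I`, so a Stanley decomposition of
`S/I` is a partition of their exponents into sets `{a | u ≤ a, a = u off Z}`. For an intersection of
three primes generated by disjoint sets of variables `A`, `B`, `C`, an exponent is standard exactly
when its support misses one of the three sets.

Lower bound: split these supports according to which of the sets `C`, `B`, `A` they miss first, and
use that the nonempty subsets of `C` can be partitioned into intervals with upper ends of size at
least `(#C + 1)/2`. For odd `#C`, arrange `C` in a cycle and take the intervals `[int Y, Y]`, where
`Y` is a vertex cover of the cycle and `int Y` consists of the elements of `Y` whose successor is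
in `Y`.

Upper bound: a Stanley space containing `e_a + e_b` with `a ∈ A`, `b ∈ B` has `Z` disjoint from `C`.
The space containing `e_a` has `Z` disjoint from `B` or from `C`, say from `C`. Then the space
containing `e_a + e_c`, for `c ∈ C`, has `u_c = 1` and `Z` disjoint from `B`. If the `Z` belonging
to `c` contained `c'` and vice versa, both spaces would contain `e_a + e_c + e_c'`, hence coincide,
against `u_c = 1` and `u ≤ e_a + e_c'`. Counting pairs `(c, c')`, one of these `Z` contains at most
`(#C + 1)/2` elements of `C`.
-/

universe u

section IntervalPartition

open Finset Function
open scoped SetFamily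

/-- A family `F` of finite sets is a finite disjoint union of intervals `[L, U]` of the Boolean
lattice whose upper ends all have at least `d` elements. -/
def HasIntervalPartition {σ : Type u} (F : Set (Finset σ)) (d : ℕ) : Prop :=
  ∃ (ι : Type u) (_ : Finite ι) (L U : ι → Finset σ), (∀ i, L i ⊆ U i) ∧ (∀ i, d ≤ #(U i)) ∧
    Pairwise (Disjoint on fun i ↦ Set.Icc (L i) (U i)) ∧ ⋃ i, Set.Icc (L i) (U i) = F

theorem Icc_sups_Icc {α : Type*} [DistribLattice α] {a b c d : α} (hab : a ≤ b) (hcd : c ≤ d) :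
    Set.Icc a b ⊻ Set.Icc c d = Set.Icc (a ⊔ c) (b ⊔ d) := by
  refine Set.Subset.antisymm ?_ fun x ⟨hx, hx'⟩ ↦ Set.mem_sups.2
    ⟨x ⊓ b, ⟨le_inf (le_sup_left.trans hx) hab, inf_le_right⟩,
      x ⊓ d, ⟨le_inf (le_sup_right.trans hx) hcd, inf_le_right⟩, ?_⟩
  · rintro _ ⟨x, ⟨hax, hxb⟩, y, ⟨hcy, hyd⟩, rfl⟩
    exact ⟨sup_le_sup hax hcy, sup_le_sup hxb hyd⟩
  · rw [← inf_sup_left, inf_eq_left.2 hx']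

theorem eq_and_eq_of_sup_eq_sup {α : Type*} [DistribLattice α] [OrderBot α] {a a' b b' : α}
    (hab' : Disjoint a b') (ha'b : Disjoint a' b) (h : a ⊔ b = a' ⊔ b') : a = a' ∧ b = b' :=
  ⟨le_antisymm (hab'.left_le_of_le_sup_right (le_sup_left.trans h.le))
      (ha'b.left_le_of_le_sup_right (le_sup_left.trans h.ge)),
    le_antisymm (ha'b.symm.left_le_of_le_sup_left (le_sup_right.trans h.le))
      (hab'.symm.left_le_of_le_sup_left (le_sup_right.trans h.ge))⟩

namespace HasIntervalPartition

variable {σ : Type u} {F G : Set (Finset σ)} {d e : ℕ}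

theorem mono (hF : HasIntervalPartition F d) (hed : e ≤ d) : HasIntervalPartition F e := by
  obtain ⟨ι, hι, L, U, hLU, hU, hdisj, hcover⟩ := hF
  exact ⟨ι, hι, L, U, hLU, fun i ↦ hed.trans (hU i), hdisj, hcover⟩

theorem Icc {L U : Finset σ} (hLU : L ⊆ U) : HasIntervalPartition (Set.Icc L U) #U :=
  ⟨PUnit, inferInstance, fun _ ↦ L, fun _ ↦ U, fun _ ↦ hLU, fun _ ↦ le_rfl,
    Subsingleton.pairwise, Set.iUnion_const _⟩

theorem union (hF : HasIntervalPartition F d) (hG : HasIntervalPartition G d)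
    (hFG : Disjoint F G) : HasIntervalPartition (F ∪ G) d := by
  obtain ⟨ι, _, L, U, hLU, hU, hdisj, rfl⟩ := hF
  obtain ⟨κ, _, L', U', hLU', hU', hdisj', rfl⟩ := hG
  simp only [Set.disjoint_iUnion_left, Set.disjoint_iUnion_right] at hFG
  refine ⟨ι ⊕ κ, inferInstance, Sum.elim L L', Sum.elim U U', Sum.rec hLU hLU',
    Sum.rec hU hU', ?_, Set.iUnion_sum⟩
  rintro (i | i) (j | j) hij
  · exact hdisj (ne_of_apply_ne _ hij)
  · exact hFG j i
  · exact (hFG i j).symm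
  · exact hdisj' (ne_of_apply_ne _ hij)

theorem sups [DecidableEq σ] (hF : HasIntervalPartition F d) (hG : HasIntervalPartition G e)
    (hFG : ∀ S ∈ F, ∀ T ∈ G, Disjoint S T) : HasIntervalPartition (F ⊻ G) (d + e) := by
  obtain ⟨ι, _, L, U, hLU, hU, hdisj, rfl⟩ := hF
  obtain ⟨κ, _, L', U', hLU', hU', hdisj', rfl⟩ := hG
  have hUU' (i : ι) (k : κ) : Disjoint (U i) (U' k) :=
    hFG _ (Set.mem_iUnion_of_mem i ⟨hLU i, subset_rfl⟩)
      _ (Set.mem_iUnion_of_mem k ⟨hLU' k, subset_rfl⟩)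
  have hIcc (p : ι × κ) := Icc_sups_Icc (hLU p.1) (hLU' p.2)
  refine ⟨ι × κ, inferInstance, fun p ↦ L p.1 ∪ L' p.2, fun p ↦ U p.1 ∪ U' p.2,
    fun p ↦ union_subset_union (hLU p.1) (hLU' p.2), fun p ↦ ?_, fun p q hpq ↦ ?_, ?_⟩
  · rw [card_union_of_disjoint (hUU' p.1 p.2)]
    exact add_le_add (hU p.1) (hU' p.2)
  · contrapose! hpq
    obtain ⟨_, hp, hq⟩ := Set.not_disjoint_iff.1 hpq
    obtain ⟨S, hS, T, hT, rfl⟩ := Set.mem_sups.1 ((hIcc p).ge hp)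
    obtain ⟨S', hS', T', hT', h⟩ := Set.mem_sups.1 ((hIcc q).ge hq)
    obtain ⟨rfl, rfl⟩ := eq_and_eq_of_sup_eq_sup ((hUU' q.1 p.2).mono hS'.2 hT.2)
      ((hUU' p.1 q.2).mono hS.2 hT'.2) h
    exact Prod.ext (hdisj.eq (Set.not_disjoint_iff.2 ⟨S', hS, hS'⟩))
      (hdisj'.eq (Set.not_disjoint_iff.2 ⟨T', hT, hT'⟩))
  · rw [← Set.image_sup_prod, Set.image2_iUnion_left, Set.iUnion_prod']
    simp_rw [Set.image2_iUnion_right]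
    exact Set.iUnion₂_congr fun i k ↦ (hIcc (i, k)).symm

end HasIntervalPartition

theorem exists_hittingTime {α : Type*} (f : α → α) (T : Set α) :
    ∃ τ : α → ℕ, (∀ x ∈ T, τ x = 0) ∧
      ∀ x ∉ T, (∃ k, f^[k] x ∈ T) → τ x = τ (f x) + 1 := by
  classical
  refine ⟨fun x ↦ sInf {k | f^[k] x ∈ T}, fun x hx ↦ Nat.sInf_eq_zero.2 (.inl hx), ?_⟩
  rintro x hx hex
  exact (Nat.sInf_add (p := fun k ↦ f^[k] x ∈ T) (n := 1) (by
    refine Nat.one_le_iff_ne_zero.2 fun h0 ↦ ?_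
    exact (Nat.sInf_eq_zero.1 h0).elim hx (Set.nonempty_iff_ne_empty.1 hex))).symm

/-- Off `T`, exactly one of `x` and `f x` belongs to `Y`, so `Y` consists of the points that reach
`T` after an even number of steps. -/
theorem existsUnique_mem_iff_mem_or_apply_notMem {α : Type*} {f : α → α} {C T : Finset α}
    (hf : Set.MapsTo f C C) (hT : ∀ x ∈ C, ∃ k, f^[k] x ∈ T) :
    ∃! Y, Y ⊆ C ∧ ∀ x ∈ C, x ∈ Y ↔ x ∈ T ∨ f x ∉ Y := by
  obtain ⟨τ, hτ, hτ'⟩ := exists_hittingTime f T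
  refine ⟨{x ∈ C | Even (τ x)}, ⟨filter_subset .., fun x hx ↦ ?_⟩, fun Y ⟨hYC, hY⟩ ↦ ?_⟩
  · have hfx : f x ∈ C := hf hx
    by_cases hxT : x ∈ T
    · simp [hx, hxT, hτ x hxT]
    · simp [hx, hfx, hxT, hτ' x hxT (hT x hx), Nat.even_add_one]
  · have hYτ (n : ℕ) : ∀ x ∈ C, τ x = n → (x ∈ Y ↔ Even n) := by
      induction n with
      | zero =>
        intro x hx hx0
        have hxT : x ∈ T := by
          by_contra hxT
          exact Nat.succ_ne_zero _ ((hτ' x hxT (hT x hx)).symm.trans hx0)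
        simp [hY x hx, hxT]
      | succ n ih =>
        intro x hx hxn
        have hxT : x ∉ T := fun hxT ↦ by simp [hτ x hxT] at hxn
        have hfx : τ (f x) = n := by simpa [hτ' x hxT (hT x hx)] using hxn
        rw [hY x hx, ih (f x) (hf hx) hfx, Nat.even_add_one]
        simp only [hxT, false_or]
    ext x
    rw [mem_filter]
    exact ⟨fun hx ↦ ⟨hYC hx, (hYτ _ x (hYC hx) rfl).1 hx⟩, fun hx ↦ (hYτ _ x hx.1 rfl).2 hx.2⟩

variable {σ : Type u}

/-- The vertex covers of the cycle on `C` whose edges are the pairs `{x, f x}`; this is the meaning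
of the definition when `f` is a cyclic permutation of `C`. They index the intervals into which the
nonempty subsets of `C` are partitioned when `#C` is odd. -/
def cycleVertexCovers [DecidableEq σ] (f : Equiv.Perm σ) (C : Finset σ) : Finset (Finset σ) :=
  {Y ∈ C.powerset | ∀ x ∈ C, x ∈ Y ∨ f x ∈ Y}

variable {f : Equiv.Perm σ} {C Y T : Finset σ}

theorem mem_cycleVertexCovers [DecidableEq σ] :
    Y ∈ cycleVertexCovers f C ↔ Y ⊆ C ∧ ∀ x ∈ C, x ∈ Y ∨ f x ∈ Y := by
  rw [cycleVertexCovers, mem_filter, mem_powerset]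

theorem card_add_card_filter_apply_mem [DecidableEq σ] (hf : f.IsCycleOn (C : Set σ))
    (hY : Y ∈ cycleVertexCovers f C) : #C + #{x ∈ Y | f x ∈ Y} = 2 * #Y := by
  obtain ⟨hYC, hcover⟩ := mem_cycleVertexCovers.1 hY
  have hpre : Y.map f.symm.toEmbedding = {x ∈ C | f x ∈ Y} := by
    ext x
    simp only [mem_map_equiv, Equiv.symm_symm, mem_filter]
    exact ⟨fun hx ↦ ⟨hf.apply_mem_iff.1 (hYC hx), hx⟩, And.right⟩
  have hunion : Y ∪ {x ∈ C | f x ∈ Y} = C := by grind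
  have hinter : Y ∩ {x ∈ C | f x ∈ Y} = {x ∈ Y | f x ∈ Y} := by grind
  calc #C + #{x ∈ Y | f x ∈ Y} = #Y + #{x ∈ C | f x ∈ Y} := by
        rw [← card_union_add_card_inter Y, hunion, hinter]
    _ = 2 * #Y := by rw [← hpre, card_map, two_mul]

theorem mem_cycleVertexCovers_and_mem_Icc_iff [DecidableEq σ] (hTC : T ⊆ C) :
    Y ∈ cycleVertexCovers f C ∧ T ∈ Set.Icc {x ∈ Y | f x ∈ Y} Y ↔
      Y ⊆ C ∧ ∀ x ∈ C, x ∈ Y ↔ x ∈ T ∨ f x ∉ Y := by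
  rw [mem_cycleVertexCovers, Set.mem_Icc]
  grind

theorem HasIntervalPartition.Ioc_empty_of_odd (hC : Odd #C) :
    HasIntervalPartition (Set.Ioc ∅ C) ((#C + 1) / 2) := by
  classical
  obtain ⟨f, hf, -⟩ := C.countable_toSet.exists_cycleOn
  have hcard (Y : cycleVertexCovers f C) := card_add_card_filter_apply_mem hf Y.2
  have hsub {Y : cycleVertexCovers f C} {T : Finset σ}
      (hT : T ∈ Set.Icc {x ∈ Y.1 | f x ∈ Y.1} Y.1) : T ∈ Set.Ioc ∅ C := by
    refine ⟨lt_of_lt_of_le ?_ hT.1, hT.2.trans (mem_cycleVertexCovers.1 Y.2).1⟩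
    -- Only an even cycle has a vertex cover without two consecutive vertices.
    refine empty_ssubset.2 (card_pos.1 ?_)
    grind
  have hunique {T : Finset σ} (hT : T ∈ Set.Ioc ∅ C) :
      ∃! Y, Y ∈ cycleVertexCovers f C ∧ T ∈ Set.Icc {x ∈ Y | f x ∈ Y} Y := by
    simp_rw [mem_cycleVertexCovers_and_mem_Icc_iff hT.2]
    obtain ⟨y, hy⟩ := empty_ssubset.1 hT.1
    refine existsUnique_mem_iff_mem_or_apply_notMem hf.1.mapsTo fun x hx ↦ ?_
    obtain ⟨k, -, hk⟩ := hf.exists_pow_eq hx (hT.2 hy)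
    exact ⟨k, by rwa [Equiv.Perm.iterate_eq_pow, hk]⟩
  refine ⟨cycleVertexCovers f C, inferInstance, fun Y ↦ {x ∈ Y.1 | f x ∈ Y.1}, fun Y ↦ Y,
    fun Y ↦ filter_subset .., fun Y ↦ ?_, fun Y Y' hne ↦ ?_, ?_⟩
  · grind
  · refine Set.disjoint_left.2 fun T hT hT' ↦ hne (Subtype.ext ?_)
    exact (hunique (hsub hT)).unique ⟨Y.2, hT⟩ ⟨Y'.2, hT'⟩
  · refine Set.Subset.antisymm (Set.iUnion_subset fun Y T ↦ hsub) fun T hT ↦ ?_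
    obtain ⟨Y, hY, hTY⟩ := (hunique hT).exists
    exact Set.mem_iUnion_of_mem ⟨Y, hY⟩ hTY

theorem HasIntervalPartition.Ioc_empty_insert [DecidableEq σ] {d : ℕ} {y : σ}
    (hy : y ∉ C) (hC : HasIntervalPartition (Set.Ioc ∅ C) d) (hd : d ≤ #C + 1) :
    HasIntervalPartition (Set.Ioc ∅ (insert y C)) d := by
  have hIcc : HasIntervalPartition (Set.Icc {y} (insert y C)) d :=
    (HasIntervalPartition.Icc (by simp)).mono (by rwa [card_insert_of_notMem hy])
  have heq : Set.Ioc ∅ (insert y C) = Set.Ioc ∅ C ∪ Set.Icc {y} (insert y C) := by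
    ext T
    simp only [Set.mem_union, Set.mem_Ioc, Set.mem_Icc, empty_ssubset,
      singleton_subset_iff]
    by_cases hyT : y ∈ T
    · grind
    · grind
  rw [heq]
  refine hC.union hIcc (Set.disjoint_left.2 fun T hT hT' ↦ hy ?_)
  exact hT.2 (singleton_subset_iff.1 hT'.1)

theorem hasIntervalPartition_Ioc_empty (C : Finset σ) :
    HasIntervalPartition (Set.Ioc ∅ C) ((#C + 1) / 2) := by
  classical
  rcases Nat.even_or_odd #C with hC | hC
  · rcases C.eq_empty_or_nonempty with rfl | ⟨y, hy⟩
    · refine ⟨PEmpty, inferInstance, nofun, nofun, nofun, nofun, nofun, by simp⟩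
    · have hcard := card_erase_add_one hy
      have hodd : Odd #(C.erase y) := by grind
      rw [← insert_erase hy]
      refine HasIntervalPartition.Ioc_empty_insert (notMem_erase y C) ?_ ?_
      · convert HasIntervalPartition.Ioc_empty_of_odd hodd using 1
        grind
      · grind
  · exact HasIntervalPartition.Ioc_empty_of_odd hC

end IntervalPartition

section FacesMissing

open Finset
open scoped SetFamily

theorem mem_sups_Ioc_empty_iff {σ : Type*} [DecidableEq σ] {F : Set (Finset σ)} {C T : Finset σ}
    (hF : ∀ S ∈ F, Disjoint S C) :
    T ∈ F ⊻ Set.Ioc ∅ C ↔ T \ C ∈ F ∧ ¬Disjoint T C := by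
  rw [Set.mem_sups]
  constructor
  · rintro ⟨R, hR, S, ⟨hS, hSC⟩, rfl⟩
    obtain ⟨x, hx⟩ := empty_ssubset.1 hS
    refine ⟨?_, not_disjoint_iff.2 ⟨x, mem_union_right R hx, hSC hx⟩⟩
    rwa [sup_sdiff, (hF R hR).sdiff_eq_left, sdiff_eq_bot_iff.2 hSC, sup_bot_eq]
  · rintro ⟨hT, hTC⟩
    exact ⟨T \ C, hT, T ∩ C, ⟨empty_ssubset.2 (not_disjoint_iff_nonempty_inter.1 hTC),
      inter_subset_right⟩, sup_comm _ _ |>.trans (sup_inf_sdiff T C)⟩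

theorem HasIntervalPartition.setOf_sdiff_mem_and_not_disjoint {σ : Type u} [DecidableEq σ]
    {F : Set (Finset σ)} {d : ℕ} {C : Finset σ} (hF : HasIntervalPartition F d)
    (hFC : ∀ S ∈ F, Disjoint S C) :
    HasIntervalPartition {T | T \ C ∈ F ∧ ¬Disjoint T C} (d + (#C + 1) / 2) := by
  simp_rw [← mem_sups_Ioc_empty_iff hFC]
  exact hF.sups (hasIntervalPartition_Ioc_empty C) fun S hS T hT ↦ (hFC S hS).mono_right hT.2

variable {σ : Type u} [Fintype σ] [DecidableEq σ] {A B C : Finset σ}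

theorem hasIntervalPartition_setOf_disjoint (D : Finset σ) :
    HasIntervalPartition {T | Disjoint T D} #Dᶜ := by
  convert HasIntervalPartition.Icc (empty_subset Dᶜ) using 1
  ext T
  simp [subset_compl_iff_disjoint_right]

theorem card_compl_union_add_card_left (hAB : Disjoint A B) : #(A ∪ B)ᶜ + #A = #Bᶜ := by
  rw [compl_union, inter_comm, ← sdiff_eq_inter_compl,
    card_sdiff_add_card_eq_card (subset_compl_iff_disjoint_right.2 hAB)]

theorem hasIntervalPartition_disjoint_and_not_disjoint (hBC : Disjoint B C) :
    HasIntervalPartition {T | Disjoint T B ∧ ¬Disjoint T C} (#(B ∪ C)ᶜ + (#C + 1) / 2) := by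
  convert (hasIntervalPartition_setOf_disjoint (B ∪ C)).setOf_sdiff_mem_and_not_disjoint
    (C := C) fun S hS ↦ (disjoint_union_right.1 hS).2 using 4 with T
  simp [disjoint_sdiff_comm, hBC.sdiff_eq_left]

theorem hasIntervalPartition_disjoint_and_not_disjoint_and_not_disjoint (hAB : Disjoint A B)
    (hAC : Disjoint A C) (hBC : Disjoint B C) :
    HasIntervalPartition {T | Disjoint T A ∧ ¬Disjoint T B ∧ ¬Disjoint T C}
      (#(A ∪ (B ∪ C))ᶜ + (#B + 1) / 2 + (#C + 1) / 2) := by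
  have hB : HasIntervalPartition {T | Disjoint T (A ∪ C) ∧ ¬Disjoint T B}
      (#(A ∪ (B ∪ C))ᶜ + (#B + 1) / 2) := by
    convert hasIntervalPartition_disjoint_and_not_disjoint
      (disjoint_union_left.2 ⟨hAB, hBC.symm⟩) using 4
    rw [union_assoc, union_comm B]
  convert hB.setOf_sdiff_mem_and_not_disjoint (C := C)
    fun S hS ↦ (disjoint_union_right.1 hS.1).2 using 2 with T
  simp [disjoint_sdiff_comm, hAC.sdiff_eq_left, hBC.sdiff_eq_left, and_assoc]

/-- The simplicial complex of all sets that miss at least one of `A`, `B`, `C`. It is the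
Stanley-Reisner complex of `P_A ∩ P_B ∩ P_C`, where `P_A` is generated by the variables in `A`. -/
def facesMissing {σ : Type*} (A B C : Finset σ) : Set (Finset σ) :=
  {T | Disjoint T A ∨ Disjoint T B ∨ Disjoint T C}

theorem hasIntervalPartition_facesMissing (hAB : Disjoint A B) (hAC : Disjoint A C)
    (hBC : Disjoint B C) (hAcard : #A ≤ (#B + 1) / 2) :
    HasIntervalPartition (facesMissing A B C) (#(B ∪ C)ᶜ + min #B ((#C + 1) / 2)) := by
  have hBcard := card_compl_union_add_card_left hBC
  have hABCcard := card_compl_union_add_card_left (disjoint_union_right.2 ⟨hAB, hAC⟩)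
  have hfaces : facesMissing A B C = {T | Disjoint T C} ∪ {T | Disjoint T B ∧ ¬Disjoint T C} ∪
      {T | Disjoint T A ∧ ¬Disjoint T B ∧ ¬Disjoint T C} := by
    ext T
    simp only [facesMissing, Set.mem_union, Set.mem_ofPred_eq]
    tauto
  rw [hfaces]
  refine (((hasIntervalPartition_setOf_disjoint C).mono ?_).union
    ((hasIntervalPartition_disjoint_and_not_disjoint hBC).mono ?_) ?_).union
    ((hasIntervalPartition_disjoint_and_not_disjoint_and_not_disjoint hAB hAC hBC).mono ?_) ?_
  · lia
  · lia
  · exact Set.disjoint_left.2 fun T hT hT' ↦ hT'.2 hT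
  · lia
  · exact Set.disjoint_left.2 fun T hT hT' ↦ hT.elim hT'.2.2 fun h ↦ hT'.2.1 h.1

end FacesMissing

section RestrictSupport

variable {R σ : Type*} [CommSemiring R]

theorem restrictSupport_le_restrictSupport_iff [Nontrivial R] {s t : Set (σ →₀ ℕ)} :
    restrictSupport R s ≤ restrictSupport R t ↔ s ⊆ t := by
  refine ⟨fun h a ha ↦ ?_, restrictSupport_mono R⟩
  have hmem : monomial a (1 : R) ∈ restrictSupport R t :=
    h ((monomial_mem_restrictSupport R).2 (.inl ha))
  exact ((monomial_mem_restrictSupport R).1 hmem).resolve_right one_ne_zero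

theorem restrictSupport_inter (s t : Set (σ →₀ ℕ)) :
    restrictSupport R (s ∩ t) = restrictSupport R s ⊓ restrictSupport R t := by
  ext p
  simp only [Submodule.mem_inf, mem_restrictSupport_iff, Set.subset_inter_iff]

theorem restrictSupport_union (s t : Set (σ →₀ ℕ)) :
    restrictSupport R (s ∪ t) = restrictSupport R s ⊔ restrictSupport R t := by
  simp only [restrictSupport_eq_span, Set.image_union, Submodule.span_union]

theorem restrictSupport_iUnion {ι : Sort*} (s : ι → Set (σ →₀ ℕ)) :
    restrictSupport R (⋃ i, s i) = ⨆ i, restrictSupport R (s i) := by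
  simp only [restrictSupport_eq_span, Set.image_iUnion, Submodule.span_iUnion]

theorem restrictSupport_eq_top_iff [Nontrivial R] {s : Set (σ →₀ ℕ)} :
    restrictSupport R s = ⊤ ↔ s = Set.univ := by
  rw [← top_le_iff, ← restrictSupport_univ R,
    restrictSupport_le_restrictSupport_iff, Set.univ_subset_iff]

theorem disjoint_restrictSupport_iff [Nontrivial R] {s t : Set (σ →₀ ℕ)} :
    Disjoint (restrictSupport R s) (restrictSupport R t) ↔ Disjoint s t := by
  have hempty : restrictSupport R (∅ : Set (σ →₀ ℕ)) = ⊥ := by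
    rw [restrictSupport_eq_span, Set.image_empty, Submodule.span_empty]
  rw [disjoint_iff_inf_le, ← restrictSupport_inter, ← hempty,
    restrictSupport_le_restrictSupport_iff, Set.disjoint_iff]

end RestrictSupport

section MonomialIdeal

variable {K σ : Type*} [Field K] {I J : Ideal (MvPolynomial σ K)}

theorem isMonomialIdeal_iff_forall_mem_support :
    IsMonomialIdeal I ↔ ∀ p ∈ I, ∀ a ∈ p.support, monomial a (1 : K) ∈ I := by
  constructor
  · rintro ⟨A, rfl⟩ p hp a ha
    rw [mem_ideal_span_monomial_image] at hp ⊢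
    intro b hb
    rw [Finset.mem_singleton.1 (support_monomial_subset hb)]
    exact hp a ha
  · refine fun h ↦ ⟨{a | monomial a 1 ∈ I}, le_antisymm (fun p hp ↦ ?_) ?_⟩
    · exact mem_ideal_span_monomial_image.2 fun a ha ↦ ⟨a, h p hp a ha, le_rfl⟩
    · exact Ideal.span_le.2 (Set.image_subset_iff.2 fun a ha ↦ ha)

theorem isMonomialIdeal_span_X_image (s : Set σ) :
    IsMonomialIdeal (Ideal.span (X '' s : Set (MvPolynomial σ K))) :=
  ⟨(fun i ↦ Finsupp.single i 1) '' s, by rw [Set.image_image]; rfl⟩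

theorem IsMonomialIdeal.inf (hI : IsMonomialIdeal I) (hJ : IsMonomialIdeal J) :
    IsMonomialIdeal (I ⊓ J) := by
  rw [isMonomialIdeal_iff_forall_mem_support] at *
  exact fun p hp a ha ↦ ⟨hI p hp.1 a ha, hJ p hp.2 a ha⟩

/-- The exponents of the standard monomials of `I`, which form a basis of `S/I` when `I` is a
monomial ideal. -/
def standardExponents (I : Ideal (MvPolynomial σ K)) : Set (σ →₀ ℕ) :=
  {a | monomial a 1 ∉ I}

theorem IsMonomialIdeal.restrictScalars_eq (hI : IsMonomialIdeal I) :
    I.restrictScalars K = restrictSupport K (standardExponents I)ᶜ := by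
  ext p
  rw [Submodule.restrictScalars_mem, mem_restrictSupport_iff]
  constructor
  · exact fun hp a ha ↦ not_not.2 (isMonomialIdeal_iff_forall_mem_support.1 hI p hp a ha)
  · intro hp
    rw [p.as_sum]
    refine I.sum_mem fun a ha ↦ ?_
    rw [← mul_one (coeff a p), ← C_mul_monomial]
    exact I.mul_mem_left _ (not_not.1 (hp ha))

theorem monomial_mem_span_X_image_iff {A : Finset σ} {a : σ →₀ ℕ} :
    monomial a 1 ∈ (Ideal.span (X '' A) : Ideal (MvPolynomial σ K)) ↔ ¬Disjoint a.support A := by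
  classical
  simp [mem_ideal_span_X_image, support_monomial, Finset.not_disjoint_iff, and_comm]

theorem standardExponents_span_X_image_inf {A B C : Finset σ} :
    standardExponents (Ideal.span (X '' A) ⊓ Ideal.span (X '' B) ⊓ Ideal.span (X '' C) :
      Ideal (MvPolynomial σ K)) = Finsupp.support ⁻¹' facesMissing A B C := by
  ext a
  simp only [standardExponents, facesMissing, Submodule.mem_inf, monomial_mem_span_X_image_iff,
    Set.mem_ofPred_eq, Set.mem_preimage]
  tauto

end MonomialIdeal

section StanleyExponents

open Function

variable {K σ : Type*} [Field K]

/-- The exponents of the monomials in the Stanley space `x^u K[Z]`. -/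
def stanleyExponents (u : σ →₀ ℕ) (Z : Set σ) : Set (σ →₀ ℕ) :=
  {a | u ≤ a ∧ ∀ j ∉ Z, a j = u j}

theorem stanleySpace_eq_restrictSupport (u : σ →₀ ℕ) (Z : Set σ) :
    stanleySpace K u Z = restrictSupport K (stanleyExponents u Z) := by
  rw [stanleySpace, restrictSupport_eq_span, ← Set.image_image (fun a ↦ monomial a 1) (u + ·)]
  congr 2
  ext a
  constructor
  · rintro ⟨v, hv, rfl⟩
    refine ⟨le_self_add, fun j hj ↦ ?_⟩
    rw [Finsupp.add_apply, Finsupp.notMem_support_iff.1 fun h ↦ hj (hv h), add_zero]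
  · rintro ⟨hua, ha⟩
    refine ⟨a - u, fun j hj ↦ by_contra fun hjZ ↦ ?_, add_tsub_cancel_of_le hua⟩
    simp [ha j hjZ] at hj

theorem disjoint_map_iff_inf_sup_ker_le {R M N : Type*} [Ring R] [AddCommGroup M] [AddCommGroup N]
    [Module R M] [Module R N] {f : M →ₗ[R] N} {V W : Submodule R M} :
    Disjoint (V.map f) (W.map f) ↔ V ⊓ (W ⊔ f.ker) ≤ f.ker := by
  rw [disjoint_iff_inf_le, Submodule.map_inf_eq_map_inf_comap, Submodule.comap_map_eq,
    Submodule.map_le_iff_le_comap, Submodule.comap_bot]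

theorem pairwise_disjoint_and_iUnion_eq_iff {α ι : Type*} {S : ι → Set α} {G : Set α} :
    Pairwise (Disjoint on S) ∧ ⋃ i, S i = G ↔
      (∀ i, Disjoint (S i) Gᶜ) ∧ (∀ i, S i ∩ ((⋃ (j) (_ : j ≠ i), S j) ∪ Gᶜ) ⊆ Gᶜ) ∧
        (⋃ i, S i) ∪ Gᶜ = Set.univ := by
  simp only [Set.disjoint_compl_right_iff_subset]
  constructor
  · rintro ⟨hdisj, rfl⟩
    refine ⟨Set.subset_iUnion S, fun i ↦ ?_, Set.union_compl_self _⟩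
    rw [Set.inter_union_distrib_left, Set.union_subset_iff]
    refine ⟨fun a ⟨ha, ha'⟩ ↦ ?_, Set.inter_subset_right⟩
    obtain ⟨j, hji, haj⟩ := Set.mem_iUnion₂.1 ha'
    exact (Set.disjoint_left.1 (hdisj hji) haj ha).elim
  · rintro ⟨hSG, hind, hcover⟩
    refine ⟨fun i j hij ↦ Set.disjoint_left.2 fun a hai haj ↦ ?_,
      (Set.iUnion_subset hSG).antisymm fun a ha ↦ ?_⟩
    · exact hind i ⟨hai, .inl (Set.mem_iUnion₂_of_mem hij.symm haj)⟩ (hSG i hai)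
    · exact (hcover.ge (Set.mem_univ a)).resolve_right (not_not.2 ha)

theorem isStanleyDecompOfQuotient_iff {ι : Type} [Fintype ι] {I : Ideal (MvPolynomial σ K)}
    (hI : IsMonomialIdeal I) {u : ι → σ →₀ ℕ} {Z : ι → Finset σ} :
    IsStanleyDecompOfQuotient I u Z ↔
      Pairwise (Disjoint on fun i ↦ stanleyExponents (u i) (Z i)) ∧
        ⋃ i, stanleyExponents (u i) (Z i) = standardExponents I := by
  have hker : (Ideal.Quotient.mkₐ K I).toLinearMap.ker =
      restrictSupport K (standardExponents I)ᶜ := by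
    rw [← hI.restrictScalars_eq]
    ext p
    exact Ideal.Quotient.eq_zero_iff_mem
  have hrange : (Ideal.Quotient.mkₐ K I).toLinearMap.range = ⊤ :=
    LinearMap.range_eq_top.2 (Ideal.Quotient.mkₐ_surjective K I)
  simp_rw [pairwise_disjoint_and_iUnion_eq_iff, IsStanleyDecompOfQuotient, iSupIndep,
    ← Submodule.map_iSup, disjoint_map_iff_inf_sup_ker_le, LinearMap.map_eq_top_iff hrange, hker,
    hI.restrictScalars_eq, stanleySpace_eq_restrictSupport, ← restrictSupport_iUnion,
    ← restrictSupport_union, ← restrictSupport_inter, restrictSupport_le_restrictSupport_iff,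
    restrictSupport_eq_top_iff, disjoint_restrictSupport_iff]

end StanleyExponents

section StanleyDepth

open Finset Function

theorem stanleyExponents_indicator_one {σ : Type*} {L U : Finset σ} (hLU : L ⊆ U) :
    stanleyExponents (Finsupp.indicator L fun _ _ ↦ 1) U =
      Finsupp.support ⁻¹' Set.Icc L U := by
  classical
  ext a
  simp only [stanleyExponents, Set.mem_ofPred_eq, Finsupp.le_def, Finsupp.indicator_apply,
    Set.mem_preimage, Set.mem_Icc, subset_iff, Finsupp.mem_support_iff, mem_coe]
  constructor
  · rintro ⟨hL, hU⟩
    refine ⟨fun j hj ↦ ?_, fun j hj ↦ by_contra fun hjU ↦ hj ?_⟩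
    · simpa [hj, Nat.one_le_iff_ne_zero] using hL j
    · have hjL : j ∉ L := fun h ↦ hjU (hLU h)
      simpa [hjL] using hU j hjU
  · rintro ⟨hL, hU⟩
    refine ⟨fun j ↦ ?_, fun j hjU ↦ ?_⟩
    · split_ifs with hj
      · exact Nat.one_le_iff_ne_zero.2 (hL hj)
      · exact Nat.zero_le _
    · rw [dif_neg fun h ↦ hjU (hLU h)]
      exact not_not.1 fun h ↦ hjU (hU h)

variable {K : Type*} {σ : Type u} [Field K] [Finite σ] {I : Ideal (MvPolynomial σ K)}

theorem le_sdepthQuot {ι : Type*} [Finite ι] [Nonempty ι] {u : ι → σ →₀ ℕ} {Z : ι → Finset σ}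
    {d : ℕ} (hI : IsMonomialIdeal I)
    (hdisj : Pairwise (Disjoint on fun i ↦ stanleyExponents (u i) (Z i)))
    (hcover : ⋃ i, stanleyExponents (u i) (Z i) = standardExponents I) (hd : ∀ i, d ≤ #(Z i)) :
    d ≤ sdepthQuot I := by
  have := Fintype.ofFinite σ
  obtain ⟨n, ⟨e⟩⟩ := Finite.exists_equiv_fin ι
  refine le_csSup ⟨Fintype.card σ, ?_⟩ ⟨Fin n, inferInstance, e.symm.nonempty, u ∘ e.symm,
    Z ∘ e.symm, (isStanleyDecompOfQuotient_iff hI).2 ⟨?_, ?_⟩, fun i ↦ hd _⟩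
  · rintro d ⟨κ, -, ⟨k⟩, -, Z', -, hd⟩
    exact (hd k).trans (card_le_univ (Z' k))
  · exact hdisj.comp_of_injective e.symm.injective
  · exact (e.symm.surjective.iUnion_comp fun i ↦ stanleyExponents (u i) (Z i : Set σ)).trans hcover

theorem HasIntervalPartition.le_sdepthQuot {F : Set (Finset σ)} {d : ℕ}
    (hF : HasIntervalPartition F d) (hne : F.Nonempty) (hI : IsMonomialIdeal I)
    (hIF : standardExponents I = Finsupp.support ⁻¹' F) : d ≤ sdepthQuot I := by
  obtain ⟨ι, _, L, U, hLU, hU, hdisj, rfl⟩ := hF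
  have : Nonempty ι := (Set.nonempty_iUnion.1 hne).nonempty
  refine _root_.le_sdepthQuot (u := fun i ↦ Finsupp.indicator (L i) fun _ _ ↦ 1) hI ?_ ?_ hU
  · intro i j hij
    simp only [onFun, stanleyExponents_indicator_one (hLU _)]
    exact (hdisj hij).preimage _
  · simp_rw [stanleyExponents_indicator_one (hLU _), hIF, Set.preimage_iUnion]

end StanleyDepth

section UpperBound

open Finset Function

theorem exists_two_mul_card_filter_le {α : Type*} {s : Finset α} {r : α → α → Prop}
    [DecidableRel r] (hs : s.Nonempty) (hr : ∀ a ∈ s, ∀ b ∈ s, r a b → r b a → a = b) :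
    ∃ a ∈ s, 2 * #{b ∈ s | r a b} ≤ #s + 1 := by
  classical
  refine exists_le_of_sum_le hs ?_
  have hcomm : ∑ a ∈ s, #{b ∈ s | r a b} = ∑ a ∈ s, #{b ∈ s | r b a} :=
    sum_card_bipartiteAbove_eq_sum_card_bipartiteBelow r
  rw [← mul_sum, two_mul]
  nth_rewrite 2 [hcomm]
  rw [← sum_add_distrib]
  refine sum_le_sum fun a ha ↦ ?_
  rw [← card_union_add_card_inter]
  refine add_le_add (card_le_card (union_subset (filter_subset ..) (filter_subset ..)))
    (card_le_one.2 ?_)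
  grind

variable {σ ι : Type*} {u : ι → σ →₀ ℕ} {Z : ι → Finset σ}

theorem add_mem_stanleyExponents {u a v : σ →₀ ℕ} {Z : Set σ} (ha : a ∈ stanleyExponents u Z)
    (hv : ↑v.support ⊆ Z) : a + v ∈ stanleyExponents u Z := by
  refine ⟨ha.1.trans le_self_add, fun j hj ↦ ?_⟩
  rw [Finsupp.add_apply, Finsupp.notMem_support_iff.1 fun h ↦ hj (hv h), add_zero, ha.2 j hj]

theorem support_union_mem_of_stanleyExponents_subset [DecidableEq σ] {F : Set (Finset σ)}
    {u a : σ →₀ ℕ} {Z : Finset σ} (hF : stanleyExponents u Z ⊆ Finsupp.support ⁻¹' F)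
    (ha : a ∈ stanleyExponents u Z) : a.support ∪ Z ∈ F := by
  let v : σ →₀ ℕ := Finsupp.indicator Z fun _ _ ↦ 1
  have hv : v.support = Z := by
    ext j
    simp [v, Finsupp.indicator_apply]
  have hmem := hF (add_mem_stanleyExponents ha (coe_subset.2 hv.subset))
  rwa [Set.mem_preimage, Finsupp.support_add_eq_union, hv] at hmem

theorem apply_lt_of_add_single_mem_stanleyExponents {u w : σ →₀ ℕ} {Z : Set σ} {c : σ}
    (hwc : w + Finsupp.single c 1 ∈ stanleyExponents u Z)
    (hw : c ∈ Z → w ∉ stanleyExponents u Z) : w c < u c := by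
  by_contra! hle
  have hcZ : c ∈ Z := by
    by_contra hcZ
    have hcu : w c + 1 = u c := by simpa using hwc.2 c hcZ
    lia
  refine hw hcZ ⟨fun j ↦ ?_, fun j hj ↦ ?_⟩
  · obtain rfl | hjc := eq_or_ne j c
    · exact hle
    · simpa [Finsupp.single_eq_of_ne hjc] using hwc.1 j
  · have hjc : j ≠ c := fun h ↦ hj (h ▸ hcZ)
    simpa [Finsupp.single_eq_of_ne hjc] using hwc.2 j hj

theorem exists_two_mul_card_inter_le [DecidableEq σ]
    (hdisj : Pairwise (Disjoint on fun i ↦ stanleyExponents (u i) (Z i))) {w : σ →₀ ℕ} {k : ι}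
    (hw : w ∈ stanleyExponents (u k) (Z k)) {C : Finset σ} (hC : C.Nonempty)
    (hkC : Disjoint (Z k) C)
    (hcover : ∀ c ∈ C, w + Finsupp.single c 1 ∈ ⋃ i, stanleyExponents (u i) (Z i)) :
    ∃ c ∈ C, ∃ i, w + Finsupp.single c 1 ∈ stanleyExponents (u i) (Z i) ∧
      2 * #(C ∩ Z i) ≤ #C + 1 := by
  have : Nonempty ι := ⟨k⟩
  simp only [Set.mem_iUnion] at hcover
  choose! i hi using hcover
  have heq {a j k} (hj : a ∈ stanleyExponents (u j) (Z j))
      (hk : a ∈ stanleyExponents (u k) (Z k)) : j = k :=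
    hdisj.eq (Set.not_disjoint_iff.2 ⟨a, hj, hk⟩)
  have hu (c) (hc : c ∈ C) : w c < u (i c) c :=
    apply_lt_of_add_single_mem_stanleyExponents (hi c hc) fun hcZ hwi ↦
      disjoint_left.1 hkC (heq hwi hw ▸ mem_coe.1 hcZ) hc
  have hantisymm (c) (hc : c ∈ C) (c') (hc' : c' ∈ C) (hcc' : c' ∈ Z (i c))
      (hc'c : c ∈ Z (i c')) : c = c' := by
    by_contra hne
    have hadd : w + Finsupp.single c 1 + Finsupp.single c' 1 ∈
        stanleyExponents (u (i c)) (Z (i c)) :=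
      add_mem_stanleyExponents (hi c hc) (by simpa using hcc')
    have hadd' : w + Finsupp.single c' 1 + Finsupp.single c 1 ∈
        stanleyExponents (u (i c')) (Z (i c')) :=
      add_mem_stanleyExponents (hi c' hc') (by simpa using hc'c)
    rw [add_right_comm] at hadd'
    -- Both Stanley spaces contain `w + e_c + e_c'`, so they coincide.
    have hle : u (i c) c ≤ (w + Finsupp.single c' 1 : σ →₀ ℕ) c := by
      rw [heq hadd hadd']
      exact (hi c' hc').1 c
    exact (hu c hc).not_ge (by simpa [Finsupp.single_eq_of_ne hne] using hle)
  obtain ⟨c, hc, hcard⟩ := exists_two_mul_card_filter_le hC hantisymm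
  exact ⟨c, hc, i c, hi c hc, by rwa [filter_mem_eq_inter] at hcard⟩

theorem support_single_one_add_single_one [DecidableEq σ] (a b : σ) :
    (Finsupp.single a 1 + Finsupp.single b 1 : σ →₀ ℕ).support = {a, b} := by
  rw [Finsupp.support_add_eq_union, Finsupp.support_single _ one_ne_zero,
    Finsupp.support_single _ one_ne_zero, insert_eq]

section ThreeSets

theorem facesMissing_right_comm {σ : Type*} (A B C : Finset σ) :
    facesMissing A B C = facesMissing A C B := by
  simp only [facesMissing, or_comm (a := Disjoint _ B)]

theorem exists_mem_stanleyExponents_and_support_union_mem [DecidableEq σ]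
    {F : Set (Finset σ)} {a : σ →₀ ℕ}
    (hcover : ⋃ i, stanleyExponents (u i) (Z i) = Finsupp.support ⁻¹' F) (ha : a.support ∈ F) :
    ∃ i, a ∈ stanleyExponents (u i) (Z i) ∧ a.support ∪ Z i ∈ F := by
  obtain ⟨i, hi⟩ := Set.mem_iUnion.1 (hcover.ge ha)
  exact ⟨i, hi, support_union_mem_of_stanleyExponents_subset
    ((Set.subset_iUnion _ i).trans hcover.le) hi⟩

variable [Fintype σ] [DecidableEq σ] {A B C : Finset σ}

theorem exists_card_le_card_compl (hAC : Disjoint A C) (hBC : Disjoint B C) (hA : A.Nonempty)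
    (hB : B.Nonempty)
    (hcover : ⋃ i, stanleyExponents (u i) (Z i) = Finsupp.support ⁻¹' facesMissing A B C) :
    ∃ i, #(Z i) ≤ #Cᶜ := by
  obtain ⟨a, ha⟩ := hA
  obtain ⟨b, hb⟩ := hB
  have hab : ({a, b} : Finset σ) ∈ facesMissing A B C :=
    .inr (.inr (by simp [disjoint_left.1 hAC ha, disjoint_left.1 hBC hb]))
  rw [← support_single_one_add_single_one] at hab
  obtain ⟨i, -, hi⟩ := exists_mem_stanleyExponents_and_support_union_mem hcover hab
  rw [support_single_one_add_single_one] at hi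
  refine ⟨i, card_le_card (subset_compl_iff_disjoint_right.2 ?_)⟩
  rcases hi with h | h | h
  · simp [ha] at h
  · simp [hb] at h
  · exact (disjoint_union_left.1 h).2

theorem exists_card_le_card_compl_union_add_of_disjoint (hAB : Disjoint A B)
    (hBC : Disjoint B C) (hC : C.Nonempty)
    (hdisj : Pairwise (Disjoint on fun i ↦ stanleyExponents (u i) (Z i)))
    (hcover : ⋃ i, stanleyExponents (u i) (Z i) = Finsupp.support ⁻¹' facesMissing A B C)
    {a : σ} (ha : a ∈ A) {k : ι} (hk : Finsupp.single a 1 ∈ stanleyExponents (u k) (Z k))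
    (hkC : Disjoint (Z k) C) : ∃ i, #(Z i) ≤ #(B ∪ C)ᶜ + (#C + 1) / 2 := by
  have hac (c) (hc : c ∈ C) : ({a, c} : Finset σ) ∈ facesMissing A B C :=
    .inr (.inl (by simp [disjoint_left.1 hAB ha, disjoint_right.1 hBC hc]))
  simp_rw [← support_single_one_add_single_one] at hac
  obtain ⟨c, hc, i, hi, hcard⟩ := exists_two_mul_card_inter_le hdisj hk hC hkC
    fun c hc ↦ hcover.ge (hac c hc)
  have hface := support_union_mem_of_stanleyExponents_subset
    ((Set.subset_iUnion _ i).trans hcover.le) hi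
  rw [support_single_one_add_single_one] at hface
  have hiB : Disjoint (Z i) B := by
    rcases hface with h | h | h
    · simp [ha] at h
    · exact (disjoint_union_left.1 h).2
    · simp [hc] at h
  have hsub : Z i \ C ⊆ (B ∪ C)ᶜ :=
    subset_compl_iff_disjoint_right.2
      (disjoint_union_right.2 ⟨hiB.mono_left sdiff_subset, sdiff_disjoint⟩)
  have hle := card_le_card hsub
  have hsplit := card_sdiff_add_card_inter (Z i) C
  rw [inter_comm] at hsplit
  exact ⟨i, by lia⟩

theorem exists_card_le_card_compl_union_add (hAB : Disjoint A B) (hAC : Disjoint A C)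
    (hBC : Disjoint B C) (hA : A.Nonempty) (hB : B.Nonempty) (hBcard : #B ≤ #C)
    (hdisj : Pairwise (Disjoint on fun i ↦ stanleyExponents (u i) (Z i)))
    (hcover : ⋃ i, stanleyExponents (u i) (Z i) = Finsupp.support ⁻¹' facesMissing A B C) :
    ∃ i, #(Z i) ≤ #(B ∪ C)ᶜ + (#C + 1) / 2 := by
  obtain ⟨a, ha⟩ := hA
  have hC : C.Nonempty := card_pos.1 (hB.card_pos.trans_le hBcard)
  have hsupp : (Finsupp.single a 1 : σ →₀ ℕ).support = {a} := Finsupp.support_single _ one_ne_zero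
  have hface : {a} ∈ facesMissing A B C :=
    .inr (.inl (disjoint_singleton_left.2 (disjoint_left.1 hAB ha)))
  rw [← hsupp] at hface
  obtain ⟨k, hk, hface⟩ := exists_mem_stanleyExponents_and_support_union_mem hcover hface
  rw [hsupp] at hface
  rcases hface with h | h | h
  · simp [ha] at h
  · rw [facesMissing_right_comm] at hcover
    obtain ⟨i, hi⟩ := exists_card_le_card_compl_union_add_of_disjoint hAC hBC.symm hB hdisj
      hcover ha hk (disjoint_union_left.1 h).2
    exact ⟨i, by rw [union_comm]; lia⟩
  · exact exists_card_le_card_compl_union_add_of_disjoint hAB hBC hC hdisj hcover ha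
      hk (disjoint_union_left.1 h).2

end ThreeSets

theorem sdepthQuot_le_of_forall_exists_card_le {K : Type*} [Field K]
    {I : Ideal (MvPolynomial σ K)} (hI : IsMonomialIdeal I) {m : ℕ}
    (h : ∀ {ι : Type} {u : ι → σ →₀ ℕ} {Z : ι → Finset σ},
      Pairwise (Disjoint on fun i ↦ stanleyExponents (u i) (Z i)) →
        ⋃ i, stanleyExponents (u i) (Z i) = standardExponents I → ∃ i, #(Z i) ≤ m) :
    sdepthQuot I ≤ m := by
  refine csSup_le' ?_
  rintro d ⟨ι, _, -, u, Z, hdecomp, hd⟩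
  obtain ⟨hdisj, hcover⟩ := (isStanleyDecompOfQuotient_iff hI).1 hdecomp
  obtain ⟨i, hi⟩ := h hdisj hcover
  exact (hd i).trans hi

end UpperBound

section ThreeDisjointPrimes

open Finset

theorem sdepth_quot_eq_three_disjoint_primes_general {K σ : Type*} [Field K] [Fintype σ]
    [DecidableEq σ] {A B C : Finset σ} (hAB : Disjoint A B) (hAC : Disjoint A C)
    (hBC : Disjoint B C) (hA : A.Nonempty) (hAcard : #A ≤ (#B + 1) / 2) (hBcard : #B ≤ #C) :
    sdepthQuot (Ideal.span (X '' A) ⊓ Ideal.span (X '' B) ⊓ Ideal.span (X '' C) :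
      Ideal (MvPolynomial σ K)) = #(B ∪ C)ᶜ + min #B ((#C + 1) / 2) := by
  have hI := ((isMonomialIdeal_span_X_image (K := K) (A : Set σ)).inf
    (isMonomialIdeal_span_X_image B)).inf (isMonomialIdeal_span_X_image C)
  have hB : B.Nonempty := card_pos.1 (by have := hA.card_pos; lia)
  refine le_antisymm (sdepthQuot_le_of_forall_exists_card_le hI fun hdisj hcover ↦ ?_) ?_
  · rw [standardExponents_span_X_image_inf] at hcover
    rw [← min_add_add_left, card_compl_union_add_card_left hBC]
    rcases le_total #Cᶜ (#(B ∪ C)ᶜ + (#C + 1) / 2) with hle | hle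
    · rw [min_eq_left hle]
      exact exists_card_le_card_compl hAC hBC hA hB hcover
    · rw [min_eq_right hle]
      exact exists_card_le_card_compl_union_add hAB hAC hBC hA hB hBcard hdisj hcover
  · exact (hasIntervalPartition_facesMissing hAB hAC hBC hAcard).le_sdepthQuot
      ⟨∅, .inl (disjoint_empty_left A)⟩ hI standardExponents_span_X_image_inf

theorem card_filter_le_val_and_val_lt {a b n : ℕ} (hb : b ≤ n) :
    #{i : Fin n | a ≤ i ∧ i < b} = b - a := by
  have hmap : ({i : Fin n | a ≤ i ∧ i < b} : Finset (Fin n)).map Fin.valEmbedding = Ico a b := by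
    ext j
    simp only [mem_map, mem_filter_univ, Fin.valEmbedding_apply, mem_Ico]
    exact ⟨by rintro ⟨i, hi, rfl⟩; exact hi, fun hj ↦ ⟨⟨j, hj.2.trans_le hb⟩, hj, rfl⟩⟩
  rw [← card_map Fin.valEmbedding, hmap, Nat.card_Ico]

end ThreeDisjointPrimes

/-- **Corollary 2.6.** With `P_1, P_2, P_3` as in Corollary 2.2, if `r ≤ ⌈e/2⌉` then
`sdepth S/I = r + min(e, ⌈q/2⌉)`. -/
theorem sdepth_quot_eq_three_disjoint_primes {K : Type*} [Field K] {r e q n : ℕ}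
    (hr : 0 < r) (hre : r ≤ e) (heq : e ≤ q) (hn : r + e + q = n)
    (hre2 : r ≤ (e + 1) / 2)
    (P₁ P₂ P₃ I : Ideal (MvPolynomial (Fin n) K))
    (hP₁ : P₁ = Ideal.span
      ((fun j => (X j : MvPolynomial (Fin n) K)) '' {i : Fin n | (i : ℕ) < r}))
    (hP₂ : P₂ = Ideal.span
      ((fun j => (X j : MvPolynomial (Fin n) K)) '' {i : Fin n | r ≤ (i : ℕ) ∧ (i : ℕ) < r + e}))
    (hP₃ : P₃ = Ideal.span
      ((fun j => (X j : MvPolynomial (Fin n) K)) '' {i : Fin n | r + e ≤ (i : ℕ)}))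
    (hI : I = P₁ ⊓ P₂ ⊓ P₃) :
    sdepthQuot I = r + min e ((q + 1) / 2) := by
  subst hn hI hP₁ hP₂ hP₃
  let A : Finset (Fin (r + e + q)) := {i | i < r}
  let B : Finset (Fin (r + e + q)) := {i | r ≤ i ∧ i < r + e}
  let C : Finset (Fin (r + e + q)) := {i | r + e ≤ i}
  have hA : A.card = r := by
    simpa [A] using card_filter_le_val_and_val_lt (n := r + e + q) (a := 0) (b := r) (by lia)
  have hB : B.card = e := by
    simpa [B] using card_filter_le_val_and_val_lt (n := r + e + q) (a := r) (b := r + e) (by lia)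
  have hC : C.card = q := by
    simpa [C] using card_filter_le_val_and_val_lt (a := r + e) (le_refl (r + e + q))
  have hcompl : (B ∪ C)ᶜ = A := by
    ext i
    simp only [A, B, C, Finset.mem_compl, Finset.mem_union, Finset.mem_filter_univ]
    lia
  have hsdepth := sdepth_quot_eq_three_disjoint_primes_general (K := K) (A := A) (B := B) (C := C)
    (Finset.disjoint_filter.2 (by lia)) (Finset.disjoint_filter.2 (by lia))
    (Finset.disjoint_filter.2 (by lia)) (Finset.card_pos.1 (by lia)) (by lia) (by lia)
  rw [hcompl, hA, hB, hC] at hsdepth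
  simpa [A, B, C] using hsdepth
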